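/- (Brezis–Li–Shafrir sup + inf inequality for Lipschitz coefficients.) Let Ω ⊂ ℝ² be an open set, 0 < a ≤ b < +∞, A > 0, and K ⊂ Ω a compact set. Then there exists a constant c = c(a, b, A, K, Ω) such that for every function V : Ω → ℝ with a ≤ V(x) ≤ b for all x ∈ Ω and |V(x) − V(y)| ≤ A|x − y| for all x, y ∈ Ω, and every C² function u on Ω satisfying −Δu = V e^u in Ω, one has sup_K u + inf_Ω u ≤ c. -/

import Mathlib

open MeasureTheory Filter Metric

abbrev E2 := EuclideanSpace ℝ (Fin 2)

noncomputable def pd (j : Fin 2) (u : E2 → ℝ) (x : E2) : ℝ :=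
  fderiv ℝ u x (EuclideanSpace.single j 1)

noncomputable def lapl (u : E2 → ℝ) (x : E2) : ℝ :=
  pd 0 (pd 0 u) x + pd 1 (pd 1 u) x

/-!
In the coordinates `c + e ^ z` the equation on a disc around `c` becomes `-Δ w = V e ^ w` for
`w z = u (c + e ^ z) + 2 re z` on a half-cylinder. If `u c + u y` is large for all `y` in the disc,
then `w` is larger on the boundary circle than on its reflections in the circles
`re z = l ≤ -u c / 2 + C`. Since `V` is Lipschitz, the moving plane method applies to
`w - (A / a) e ^ re z` and shows that `w` is nondecreasing in `re z ≤ -u c / 2 + C`. But the circle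
average `g` of `w` satisfies `g'' ≤ -a e ^ g` and `g' → 2` at `-∞`, and if `u ≤ u c + log 4` near
`c` then `g (-u c / 2) ≥ -b`, so `g'` becomes negative within a length depending only on `a` and
`b`: a contradiction for large `C`. A centre `c` with this local bound is found by maximising
`(R - |y - x|) ^ 2 e ^ u y` over a disc around the given point `x`.
-/

section Laplacian

open InnerProductSpace Laplacian Topology

lemma deriv_deriv_nonneg_of_isLocalMin {f : ℝ → ℝ} {x : ℝ} (hmin : IsLocalMin f x)
    (hf : ContinuousAt f x) : 0 ≤ deriv (deriv f) x := by
  by_contra! hneg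
  have hmax : IsLocalMax f x := isLocalMax_of_deriv_deriv_neg hneg hmin.deriv_eq_zero hf
  have hconst : f =ᶠ[𝓝 x] fun _ ↦ f x := by
    filter_upwards [hmin, hmax] with y hle hge using le_antisymm hge hle
  have hzero : deriv (deriv f) x = 0 := by
    rw [hconst.deriv.deriv_eq]
    simp
  exact hneg.ne hzero

lemma hasDerivAt_comp_add_smul {E F : Type*} [NormedAddCommGroup E] [NormedSpace ℝ E]
    [NormedAddCommGroup F] [NormedSpace ℝ F] {f : E → F} {x v : E} {s : ℝ}
    (hf : DifferentiableAt ℝ f (x + s • v)) :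
    HasDerivAt (fun r : ℝ ↦ f (x + r • v)) (fderiv ℝ f (x + s • v) v) s := by
  have hline : HasDerivAt (fun r : ℝ ↦ x + r • v) v s := by
    simpa using ((hasDerivAt_id s).smul_const v).const_add x
  exact hf.hasFDerivAt.comp_hasDerivAt s hline

lemma differentiableAt_fderiv_of_contDiffAt_two {E F : Type*} [NormedAddCommGroup E]
    [NormedSpace ℝ E] [NormedAddCommGroup F] [NormedSpace ℝ F] {f : E → F} {x : E}
    (hf : ContDiffAt ℝ 2 f x) : DifferentiableAt ℝ (fderiv ℝ f) x :=
  (hf.fderiv_right (m := 1) (by norm_num)).differentiableAt (by norm_num)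

lemma fderiv_fderiv_apply {E F : Type*} [NormedAddCommGroup E] [NormedSpace ℝ E]
    [NormedAddCommGroup F] [NormedSpace ℝ F] {f : E → F} {x : E}
    (hf : DifferentiableAt ℝ (fderiv ℝ f) x) (v w : E) :
    fderiv ℝ (fun y ↦ fderiv ℝ f y v) x w = fderiv ℝ (fderiv ℝ f) x w v := by
  rw [fderiv_clm_apply hf (differentiableAt_const _)]
  simp

lemma fderiv_fderiv_nonneg_of_isLocalMin {E : Type*} [NormedAddCommGroup E] [NormedSpace ℝ E]
    {f : E → ℝ} {x : E} (hmin : IsLocalMin f x) (hf : ContDiffAt ℝ 2 f x) (v : E) :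
    0 ≤ fderiv ℝ (fderiv ℝ f) x v v := by
  have hline : Tendsto (fun s : ℝ ↦ x + s • v) (𝓝 0) (𝓝 x) :=
    Continuous.tendsto' (by fun_prop) _ _ (by simp)
  have hfirst : deriv (fun s : ℝ ↦ f (x + s • v)) =ᶠ[𝓝 0] fun s ↦ fderiv ℝ f (x + s • v) v := by
    filter_upwards [hline.eventually (hf.eventually (by simp))] with s hs
    exact (hasDerivAt_comp_add_smul (hs.differentiableAt (by norm_num))).deriv
  have hsecond : deriv (deriv fun s : ℝ ↦ f (x + s • v)) 0 = fderiv ℝ (fderiv ℝ f) x v v := by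
    have hd : DifferentiableAt ℝ (fderiv ℝ f) (x + (0 : ℝ) • v) := by
      simpa using differentiableAt_fderiv_of_contDiffAt_two hf
    rw [hfirst.deriv_eq, ((hasDerivAt_comp_add_smul hd).clm_apply (hasDerivAt_const 0 v)).deriv]
    simp
  rw [← hsecond]
  refine deriv_deriv_nonneg_of_isLocalMin ?_ ?_
  · filter_upwards [hline.eventually hmin] with s hs
    simpa using hs
  · exact ContinuousAt.comp (g := f) (by simpa using hf.continuousAt) (by fun_prop)

variable {E E' : Type*} [NormedAddCommGroup E] [InnerProductSpace ℝ E] [FiniteDimensional ℝ E]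
  [NormedAddCommGroup E'] [InnerProductSpace ℝ E'] [FiniteDimensional ℝ E']

lemma laplacian_nonneg_of_isLocalMin {f : E → ℝ} {x : E} (hmin : IsLocalMin f x)
    (hf : ContDiffAt ℝ 2 f x) : 0 ≤ Δ f x := by
  rw [laplacian_eq_iteratedFDeriv_stdOrthonormalBasis]
  refine Finset.sum_nonneg fun i _ ↦ ?_
  rw [iteratedFDeriv_two_apply]
  exact fderiv_fderiv_nonneg_of_isLocalMin hmin hf _

lemma continuousAt_laplacian {f : E → ℝ} {x : E} (hf : ContDiffAt ℝ 2 f x) :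
    ContinuousAt (Δ f) x := by
  rw [laplacian_eq_iteratedFDeriv_stdOrthonormalBasis]
  refine tendsto_finsetSum _ fun i _ ↦ ?_
  exact (ContinuousMultilinearMap.apply ℝ (fun _ : Fin 2 ↦ E) ℝ _).continuous.continuousAt.comp
    (hf.continuousAt_iteratedFDeriv (k := 2) le_rfl)

lemma laplacian_comp_add_linearIsometryEquiv (f : E' → ℝ) (c : E') (L : E ≃ₗᵢ[ℝ] E') (x : E) :
    Δ (fun y ↦ f (c + L y)) x = Δ f (c + L x) := by
  have hcomp : iteratedFDeriv ℝ 2 (fun y ↦ f (c + L y)) x =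
      (iteratedFDeriv ℝ 2 f (c + L x)).compContinuousLinearMap fun _ ↦
        (L.toContinuousLinearEquiv : E →L[ℝ] E') := by
    rw [← iteratedFDeriv_comp_add_left 2 c]
    simp only [← iteratedFDerivWithin_univ]
    exact L.toContinuousLinearEquiv.iteratedFDerivWithin_comp_right (fun z ↦ f (c + z))
      uniqueDiffOn_univ (Set.mem_univ _) 2
  let b := stdOrthonormalBasis ℝ E
  rw [laplacian_eq_iteratedFDeriv_orthonormalBasis _ b,
    laplacian_eq_iteratedFDeriv_orthonormalBasis f (b.map L)]
  refine Finset.sum_congr rfl fun i _ ↦ ?_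
  rw [hcomp, ContinuousMultilinearMap.compContinuousLinearMap_apply]
  congr 1
  ext j
  fin_cases j <;> simp

lemma laplacian_eq_fderiv_fderiv_complexPlane (f : ℂ → ℝ) (z : ℂ) :
    Δ f z = fderiv ℝ (fderiv ℝ f) z 1 1 + fderiv ℝ (fderiv ℝ f) z Complex.I Complex.I := by
  simp [laplacian_eq_iteratedFDeriv_complexPlane, iteratedFDeriv_two_apply]

lemma laplacian_comp_re {g : ℝ → ℝ} {z : ℂ} (hg : ContDiffAt ℝ 2 g z.re) :
    Δ (fun y : ℂ ↦ g y.re) z = deriv (deriv g) z.re := by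
  have hfirst : fderiv ℝ (fun y : ℂ ↦ g y.re) =ᶠ[𝓝 z] fun y ↦ deriv g y.re • Complex.reCLM := by
    filter_upwards [Complex.continuous_re.continuousAt.eventually (hg.eventually (by simp))]
      with y hy
    exact ((hy.differentiableAt (by norm_num)).hasDerivAt.comp_hasFDerivAt y
      Complex.reCLM.hasFDerivAt).fderiv
  have hderiv : DifferentiableAt ℝ (deriv g) z.re :=
    (hg.derivWithin (m := 1) (by norm_num)).differentiableAt (by norm_num)
  have hsecond : HasFDerivAt (fun y : ℂ ↦ deriv g y.re • Complex.reCLM) _ z :=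
    (hderiv.hasDerivAt.comp_hasFDerivAt z Complex.reCLM.hasFDerivAt).smul_const Complex.reCLM
  rw [laplacian_eq_fderiv_fderiv_complexPlane, hfirst.fderiv_eq, hsecond.fderiv]
  simp

lemma fderiv_fderiv_comp_of_differentiable {u : ℂ → ℝ} {f : ℂ → ℂ} (hf : Differentiable ℂ f)
    {z : ℂ} (hu : ContDiffAt ℝ 2 u (f z)) (v : ℂ) :
    fderiv ℝ (fderiv ℝ fun y ↦ u (f y)) z v v =
      fderiv ℝ (fderiv ℝ u) (f z) (deriv f z * v) (deriv f z * v) +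
        fderiv ℝ u (f z) (deriv (deriv f) z * (v * v)) := by
  have hfC : ContDiff ℝ 2 f := hf.contDiff.restrict_scalars ℝ
  have hfirst : (fun y ↦ fderiv ℝ (fun y ↦ u (f y)) y v) =ᶠ[𝓝 z]
      fun y ↦ fderiv ℝ u (f y) (deriv f y * v) := by
    filter_upwards [hf.continuous.continuousAt.eventually (hu.eventually (by simp))] with y hy
    have h : HasFDerivAt (fun y ↦ u (f y)) _ y :=
      (hy.differentiableAt (by norm_num)).hasFDerivAt.comp y (hf y).hasDerivAt.complexToReal_fderiv
    simpa using congrArg (fun M ↦ M v) h.fderiv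
  have houter : HasFDerivAt (fun y ↦ fderiv ℝ u (f y)) _ z :=
    (differentiableAt_fderiv_of_contDiffAt_two hu).hasFDerivAt.comp z
      (hf z).hasDerivAt.complexToReal_fderiv
  have hinner : HasFDerivAt (fun y ↦ deriv f y * v) _ z :=
    (hf.deriv z).hasDerivAt.complexToReal_fderiv.mul_const v
  have hcomp : ContDiffAt ℝ 2 (fun y ↦ u (f y)) z := hu.comp z hfC.contDiffAt
  rw [← fderiv_fderiv_apply (differentiableAt_fderiv_of_contDiffAt_two hcomp), hfirst.fderiv_eq,
    (houter.clm_apply hinner).fderiv]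
  simp [add_comm, mul_comm, mul_left_comm]

lemma laplacian_comp_of_differentiable {u : ℂ → ℝ} {f : ℂ → ℂ} (hf : Differentiable ℂ f) {z : ℂ}
    (hu : ContDiffAt ℝ 2 u (f z)) :
    Δ (fun y ↦ u (f y)) z = ‖deriv f z‖ ^ 2 * Δ u (f z) := by
  set B := fderiv ℝ (fderiv ℝ u) (f z) with hB
  obtain ⟨p, q, hp⟩ : ∃ p q : ℝ, deriv f z = ⟨p, q⟩ := ⟨_, _, rfl⟩
  have hone : (⟨p, q⟩ : ℂ) * 1 = p • 1 + q • Complex.I := by apply Complex.ext <;> simp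
  have hI : (⟨p, q⟩ : ℂ) * Complex.I = -(q • 1) + p • Complex.I := by apply Complex.ext <;> simp
  have hnorm : ‖(⟨p, q⟩ : ℂ)‖ ^ 2 = p ^ 2 + q ^ 2 := by
    rw [← Complex.normSq_eq_norm_sq, Complex.normSq_mk]
    ring
  rw [laplacian_eq_fderiv_fderiv_complexPlane, laplacian_eq_fderiv_fderiv_complexPlane,
    fderiv_fderiv_comp_of_differentiable hf hu, fderiv_fderiv_comp_of_differentiable hf hu, hp,
    hone, hI, hnorm, ← hB]
  simp only [map_add, map_neg, map_smul, add_apply, neg_apply, smul_apply, smul_eq_mul, mul_one,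
    Complex.I_mul_I, mul_neg]
  ring

lemma lapl_eq_laplacian {u : E2 → ℝ} {x : E2} (hu : ContDiffAt ℝ 2 u x) :
    lapl u x = Δ u x := by
  have hpd (j : Fin 2) : pd j (pd j u) x =
      fderiv ℝ (fderiv ℝ u) x (EuclideanSpace.single j 1) (EuclideanSpace.single j 1) := by
    change fderiv ℝ (fun y ↦ fderiv ℝ u y (EuclideanSpace.single j 1)) x _ = _
    exact fderiv_fderiv_apply (differentiableAt_fderiv_of_contDiffAt_two hu) _ _
  rw [laplacian_eq_iteratedFDeriv_orthonormalBasis u (EuclideanSpace.basisFun (Fin 2) ℝ)]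
  simp [lapl, hpd, iteratedFDeriv_two_apply]

end Laplacian

section MovingPlane

open Set Topology InnerProductSpace Laplacian

variable {w : ℂ → ℝ} {T l : ℝ}

lemma eventually_comap_re_atBot {p : ℂ → Prop} :
    (∀ᶠ z in comap Complex.re atBot, p z) ↔ ∃ t, ∀ z : ℂ, z.re ≤ t → p z := by
  rw [eventually_comap, eventually_atBot]
  exact ⟨fun ⟨t, ht⟩ ↦ ⟨t, fun z hz ↦ ht _ hz z rfl⟩,
    fun ⟨t, ht⟩ ↦ ⟨t, fun _ hr z hz ↦ ht z (hz ▸ hr)⟩⟩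

lemma continuous_complex_mk {X : Type*} [TopologicalSpace X] {f g : X → ℝ} (hf : Continuous f)
    (hg : Continuous g) : Continuous fun x ↦ (⟨f x, g x⟩ : ℂ) :=
  Complex.equivRealProdCLM.symm.continuous.comp (hf.prodMk hg)

lemma exists_mem_Icc_forall_eq_of_periodic (hper : Function.Periodic w (2 * Real.pi * Complex.I))
    (θ : ℝ) : ∃ φ ∈ Icc 0 (2 * Real.pi), ∀ t, w ⟨t, θ⟩ = w ⟨t, φ⟩ := by
  have hper' : Function.Periodic (fun (φ : ℝ) (t : ℝ) ↦ w ⟨t, φ⟩) (2 * Real.pi) := by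
    intro φ
    ext t
    refine Eq.trans ?_ (hper ⟨t, φ⟩)
    exact congrArg w (by apply Complex.ext <;> simp)
  obtain ⟨φ, hφ, heq⟩ := hper'.exists_mem_Ico₀ Real.two_pi_pos θ
  exact ⟨φ, Ico_subset_Icc_self hφ, congrFun heq⟩

lemma exists_isMinOn_strip {a b : ℝ} (hab : a ≤ b)
    (hw : ContinuousOn w (Complex.re ⁻¹' Icc a b))
    (hper : Function.Periodic w (2 * Real.pi * Complex.I)) :
    ∃ z ∈ Complex.re ⁻¹' Icc a b, IsMinOn w (Complex.re ⁻¹' Icc a b) z := by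
  obtain ⟨z, hz, hmin⟩ := (isCompact_Icc.reProdIm isCompact_Icc).exists_isMinOn
    (s := Icc a b ×ℂ Icc 0 (2 * Real.pi)) ⟨⟨a, 0⟩, ⟨le_rfl, hab⟩, le_rfl, Real.two_pi_pos.le⟩
    (hw.mono fun z hz ↦ hz.1)
  refine ⟨z, hz.1, fun y hy ↦ ?_⟩
  obtain ⟨φ, hφ, heq⟩ := exists_mem_Icc_forall_eq_of_periodic hper y.im
  exact (hmin (a := ⟨y.re, φ⟩) ⟨hy, hφ⟩).trans_eq (heq y.re).symm

lemma nonneg_on_strip_of_laplacian_neg {a b : ℝ}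
    (hw : ∀ z : ℂ, z.re ∈ Icc a b → ContDiffAt ℝ 2 w z)
    (hper : Function.Periodic w (2 * Real.pi * Complex.I))
    (hΔ : ∀ z : ℂ, z.re ∈ Ioo a b → Δ w z < 0)
    (ha : ∀ z : ℂ, z.re = a → 0 ≤ w z) (hb : ∀ z : ℂ, z.re = b → 0 ≤ w z)
    {z : ℂ} (hz : z.re ∈ Icc a b) : 0 ≤ w z := by
  obtain ⟨p, hp, hmin⟩ := exists_isMinOn_strip (hz.1.trans hz.2)
    (fun y hy ↦ (hw y hy).continuousAt.continuousWithinAt) hper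
  refine le_trans ?_ (hmin (a := z) hz)
  obtain hpa | hpa := eq_or_lt_of_le hp.1
  · exact ha p hpa.symm
  obtain hpb | hpb := eq_or_lt_of_le hp.2
  · exact hb p hpb
  have hloc : IsLocalMin w p := hmin.isLocalMin <|
    Complex.continuous_re.continuousAt.preimage_mem_nhds (Icc_mem_nhds hpa hpb)
  exact absurd (laplacian_nonneg_of_isLocalMin hloc (hw p hp)) (hΔ p ⟨hpa, hpb⟩).not_ge

-- Hopf's boundary lemma, by comparison with `ε (s + s ^ 2)`, `s = re z - a`, of Laplacian `2 ε`.
lemma exists_pos_mul_sub_le_of_laplacian_nonpos {a b : ℝ} (hab : a < b)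
    (hw : ∀ z : ℂ, z.re ∈ Icc a b → ContDiffAt ℝ 2 w z)
    (hper : Function.Periodic w (2 * Real.pi * Complex.I))
    (hΔ : ∀ z : ℂ, z.re ∈ Ioo a b → Δ w z ≤ 0)
    (ha : ∀ z : ℂ, z.re = a → 0 ≤ w z) (hb : ∀ z : ℂ, z.re = b → 0 < w z) :
    ∃ ε > 0, ∀ z : ℂ, z.re ∈ Icc a b → ε * (z.re - a) ≤ w z := by
  obtain ⟨p, hp, hmin⟩ := exists_isMinOn_strip le_rfl
    (fun z (hz : z.re ∈ Icc b b) ↦ (hw z ⟨hab.le.trans hz.1, hz.2⟩).continuousAt.continuousWithinAt)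
    hper
  have hδ : 0 < b - a := sub_pos.2 hab
  have hwp : 0 < w p := hb p (le_antisymm hp.2 hp.1)
  obtain ⟨ε, hε, hεp⟩ : ∃ ε > 0, ε * ((b - a) + (b - a) ^ 2) = w p :=
    ⟨w p / ((b - a) + (b - a) ^ 2), by positivity, by field_simp⟩
  refine ⟨ε, hε, fun z hz ↦ ?_⟩
  let g : ℝ → ℝ := fun t ↦ ε * ((t - a) + (t - a) ^ 2)
  have hg : ContDiff ℝ 2 g := by fun_prop
  have hbarrier (y : ℂ) : Δ (fun y : ℂ ↦ g y.re) y = 2 * ε := by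
    have hg' : deriv g = fun t ↦ ε * (1 + 2 * (t - a)) := by
      ext t
      have h := (hasDerivAt_id' t).sub_const a
      have hgt : HasDerivAt g (ε * (1 + 2 * (t - a))) t :=
        ((h.add (h.fun_pow 2)).const_mul ε).congr_deriv (by simp)
      exact hgt.deriv
    rw [laplacian_comp_re hg.contDiffAt, hg']
    simp [mul_comm]
  have hgC (y : ℂ) : ContDiffAt ℝ 2 (fun y : ℂ ↦ g y.re) y :=
    (hg.comp Complex.reCLM.contDiff).contDiffAt
  have hnonneg : 0 ≤ w z - g z.re := by
    refine nonneg_on_strip_of_laplacian_neg (w := fun y ↦ w y - g y.re)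
      (fun y hy ↦ (hw y hy).sub (hgC y)) (fun y ↦ ?_) (fun y hy ↦ ?_) (fun y hy ↦ ?_)
      (fun y hy ↦ ?_) hz
    · simp [hper y]
    · refine ((hw y (Ioo_subset_Icc_self hy)).laplacian_sub (hgC y)).trans_lt ?_
      rw [hbarrier]
      linarith [hΔ y hy]
    · simpa [g, hy] using ha y hy
    · have : w p ≤ w y := hmin (a := y) ⟨hy.ge, hy.le⟩
      simpa [g, hy, hεp] using this
  nlinarith [sq_nonneg (z.re - a)]

lemma le_two_mul_fderiv_of_eventually {E : Type*} [NormedAddCommGroup E] [NormedSpace ℝ E]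
    {f : E → ℝ} {x v : E} {ε : ℝ} (hf : DifferentiableAt ℝ f x)
    (h : ∀ᶠ s : ℝ in 𝓝[>] 0, ε * s ≤ f (x + s • v) - f (x + s • -v)) :
    ε ≤ 2 * fderiv ℝ f x v := by
  have hline (v : E) : HasDerivAt (fun r : ℝ ↦ f (x + r • v)) (fderiv ℝ f x v) 0 := by
    have := hasDerivAt_comp_add_smul (f := f) (x := x) (v := v) (s := 0) (by simpa using hf)
    simpa using this
  have hlim := ((hline v).sub (hline (-v))).tendsto_slope_zero_right
  rw [map_neg, sub_neg_eq_add, ← two_mul] at hlim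
  refine ge_of_tendsto hlim ?_
  filter_upwards [h, self_mem_nhdsWithin] with s hs hs0
  rw [smul_eq_mul, inv_mul_eq_div, le_div_iff₀ hs0]
  simpa using hs

lemma eventually_le_of_fderiv_pos {E : Type*} [NormedAddCommGroup E] [NormedSpace ℝ E]
    {f : E → ℝ} {f' : E →L[ℝ] ℝ} {x v : E} (hf : HasStrictFDerivAt f f' x) (hv : 0 < f' v) :
    ∀ᶠ p : E × ℝ in 𝓝 (x, 0), 0 ≤ p.2 → f p.1 ≤ f (p.1 + p.2 • v) := by
  have hv0 : 0 < ‖v‖ := norm_pos_iff.2 fun h ↦ by simp [h] at hv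
  have hpair : Tendsto (fun p : E × ℝ ↦ (p.1 + p.2 • v, p.1)) (𝓝 (x, 0)) (𝓝 (x, x)) :=
    Continuous.tendsto' (by fun_prop) _ _ (by simp)
  filter_upwards [hpair.eventually (hf.isLittleO.def (div_pos hv hv0))] with p hp hp0
  have hbound : f' v / ‖v‖ * ‖p.2 • v‖ = p.2 * f' v := by
    rw [norm_smul, Real.norm_of_nonneg hp0]
    field_simp
  rw [add_sub_cancel_left, hbound, map_smul, smul_eq_mul, Real.norm_eq_abs] at hp
  linarith [(abs_le.1 hp).1]

lemma laplacian_comp_reflection (w : ℂ → ℝ) (l : ℝ) (z : ℂ) :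
    Δ (fun y : ℂ ↦ w ⟨2 * l - y.re, y.im⟩) z = Δ w ⟨2 * l - z.re, z.im⟩ := by
  have hrefl (y : ℂ) : (⟨2 * l - y.re, y.im⟩ : ℂ) =
      (2 * l : ℝ) + (Complex.conjLIE.trans (LinearIsometryEquiv.neg ℝ)) y := by
    apply Complex.ext <;> simp [sub_eq_add_neg]
  simp only [hrefl]
  exact laplacian_comp_add_linearIsometryEquiv w _ _ z

/-- The conclusion of the moving plane method for the line `re z = l`: on the half-cylinder
`re z ≤ T`, the function `w` dominates its reflection in that line. A point at distance `s` to the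
right of the line is written `l + s + i θ`. -/
def ReflectionLE (w : ℂ → ℝ) (T l : ℝ) : Prop :=
  ∀ s ∈ Icc 0 (T - l), ∀ θ : ℝ, w ⟨l - s, θ⟩ ≤ w ⟨l + s, θ⟩

lemma hasDerivAt_horizontalLine {t θ : ℝ} (hw : DifferentiableAt ℝ w ⟨t, θ⟩) :
    HasDerivAt (fun s : ℝ ↦ w ⟨s, θ⟩) (fderiv ℝ w ⟨t, θ⟩ 1) t := by
  have hpoint (s : ℝ) : (⟨0, θ⟩ : ℂ) + s • 1 = ⟨s, θ⟩ := by apply Complex.ext <;> simp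
  simpa only [hpoint] using hasDerivAt_comp_add_smul (f := w) (x := ⟨0, θ⟩) (v := 1) (s := t)
    (by rwa [hpoint])

lemma le_of_fderiv_one_nonneg {t θ s : ℝ} (hw : ∀ r ≤ t, DifferentiableAt ℝ w ⟨r, θ⟩)
    (hderiv : ∀ r ≤ t, 0 ≤ fderiv ℝ w ⟨r, θ⟩ 1) (hst : s ≤ t) : w ⟨s, θ⟩ ≤ w ⟨t, θ⟩ := by
  have hline (r : ℝ) (hr : r ≤ t) := hasDerivAt_horizontalLine (hw r hr)
  refine monotoneOn_of_hasDerivWithinAt_nonneg (convex_Iic t)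
    (fun r hr ↦ (hline r hr).continuousAt.continuousWithinAt)
    (fun r hr ↦ (hline r (interior_subset (s := Iic t) hr)).hasDerivWithinAt)
    (fun r hr ↦ hderiv r (interior_subset (s := Iic t) hr)) hst self_mem_Iic hst

lemma exists_forall_le_reflectionLE (hw : ∀ z : ℂ, z.re ≤ T → ContDiffAt ℝ 2 w z)
    (hper : Function.Periodic w (2 * Real.pi * Complex.I))
    (hlim : Tendsto w (comap Complex.re atBot) atBot)
    (hderiv : ∀ᶠ z in comap Complex.re atBot, 0 ≤ fderiv ℝ w z 1) :
    ∃ l₀, ∀ l ≤ l₀, ReflectionLE w T l := by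
  obtain ⟨t₀, ht₀⟩ := eventually_comap_re_atBot.1 hderiv
  obtain ⟨p, -, hmin⟩ := exists_isMinOn_strip (min_le_right t₀ T)
    (fun z hz ↦ (hw z hz.2).continuousAt.continuousWithinAt) hper
  obtain ⟨t₁, ht₁⟩ := eventually_comap_re_atBot.1 (hlim.eventually_le_atBot (w p))
  refine ⟨min t₀ t₁, fun l hl s hs θ ↦ ?_⟩
  obtain ⟨hlt₀, hlt₁⟩ := le_min_iff.1 hl
  have hsT : l + s ≤ T := by linarith [hs.2]
  obtain hle | hlt := le_or_gt (l + s) t₀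
  · exact le_of_fderiv_one_nonneg (fun r hr ↦ (hw _ (hr.trans hsT)).differentiableAt (by norm_num))
      (fun r hr ↦ ht₀ _ (hr.trans hle)) (by linarith [hs.1])
  · exact (ht₁ ⟨l - s, θ⟩ (by change l - s ≤ t₁; linarith [hs.1])).trans
      (hmin (a := ⟨l + s, θ⟩) ⟨(min_le_left _ _).trans hlt.le, hsT⟩)

lemma eventually_reflection_le_of_fderiv_one_pos {θ : ℝ} (hw : ContDiffAt ℝ 1 w ⟨l, θ⟩)
    (hderiv : 0 < fderiv ℝ w ⟨l, θ⟩ 1) :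
    ∀ᶠ q : ℝ × ℝ × ℝ in 𝓝 (l, 0, θ),
      0 ≤ q.2.1 → w ⟨q.1 - q.2.1, q.2.2⟩ ≤ w ⟨q.1 + q.2.1, q.2.2⟩ := by
  have hleft : Continuous fun q : ℝ × ℝ × ℝ ↦ (⟨q.1 - q.2.1, q.2.2⟩ : ℂ) :=
    continuous_complex_mk (by fun_prop) (by fun_prop)
  have hpair : Tendsto (fun q : ℝ × ℝ × ℝ ↦ ((⟨q.1 - q.2.1, q.2.2⟩ : ℂ), 2 * q.2.1))
      (𝓝 (l, 0, θ)) (𝓝 (⟨l, θ⟩, 0)) :=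
    Continuous.tendsto' (hleft.prodMk (by fun_prop)) _ _ (by simp)
  filter_upwards [hpair.eventually
    (eventually_le_of_fderiv_pos (hw.hasStrictFDerivAt one_ne_zero) hderiv)] with q hq hq0
  have hshift : (⟨q.1 - q.2.1, q.2.2⟩ : ℂ) + (2 * q.2.1) • 1 = ⟨q.1 + q.2.1, q.2.2⟩ :=
    Complex.ext (by norm_num; ring) (by simp)
  simpa only [hshift] using hq (mul_nonneg zero_le_two hq0)

namespace ReflectionLE

lemma exists_pos_mul_le_sub (hrefl : ReflectionLE w T l) (hl : l < T)
    (hw : ∀ z : ℂ, z.re ≤ T → ContDiffAt ℝ 2 w z)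
    (hper : Function.Periodic w (2 * Real.pi * Complex.I))
    (hΔ : ∀ z z' : ℂ, z.re ≤ z'.re → z'.re ≤ T → z.im = z'.im → w z ≤ w z' → Δ w z' ≤ Δ w z)
    (hbd : ∀ θ, w ⟨2 * l - T, θ⟩ < w ⟨T, θ⟩) :
    ∃ ε > 0, ∀ s ∈ Icc 0 (T - l), ∀ θ, ε * s ≤ w ⟨l + s, θ⟩ - w ⟨l - s, θ⟩ := by
  have hreflC (z : ℂ) (hz : l ≤ z.re) :
      ContDiffAt ℝ 2 (fun y : ℂ ↦ w ⟨2 * l - y.re, y.im⟩) z := by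
    have hmap : ContDiff ℝ 2 fun y : ℂ ↦ (⟨2 * l - y.re, y.im⟩ : ℂ) :=
      Complex.equivRealProdCLM.symm.contDiff.comp
        ((contDiff_const.sub Complex.reCLM.contDiff).prodMk Complex.imCLM.contDiff)
    exact (hw ⟨2 * l - z.re, z.im⟩ (by change 2 * l - z.re ≤ T; linarith)).comp z hmap.contDiffAt
  have hle (z : ℂ) (hz : z.re ∈ Icc l T) : w ⟨2 * l - z.re, z.im⟩ ≤ w z := by
    convert hrefl (z.re - l) ⟨by linarith [hz.1], by linarith [hz.2]⟩ z.im using 3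
    · ring
    · simp
  let D : ℂ → ℝ := fun z ↦ w z - w ⟨2 * l - z.re, z.im⟩
  have hDper : Function.Periodic D (2 * Real.pi * Complex.I) := fun z ↦
    congrArg₂ (· - ·) (hper z) ((congrArg w (by apply Complex.ext <;> simp)).trans (hper _))
  have hDΔ (z : ℂ) (hz : z.re ∈ Ioo l T) : Δ D z ≤ 0 := by
    refine ((hw z hz.2.le).laplacian_sub (hreflC z hz.1.le)).trans_le ?_
    rw [laplacian_comp_reflection, sub_nonpos]
    exact hΔ _ _ (by simp only; linarith [hz.1]) hz.2.le rfl (hle z (Ioo_subset_Icc_self hz))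
  have hDT (z : ℂ) (hz : z.re = T) : 0 < D z := by
    simpa only [D, sub_pos, ← hz] using hbd z.im
  obtain ⟨ε, hε, hDε⟩ := exists_pos_mul_sub_le_of_laplacian_nonpos hl
    (fun z hz ↦ (hw z hz.2).sub (hreflC z hz.1)) hDper hDΔ
    (fun z hz ↦ sub_nonneg.2 (hle z ⟨hz.ge, hz.trans_le hl.le⟩)) hDT
  refine ⟨ε, hε, fun s hs θ ↦ ?_⟩
  convert hDε ⟨l + s, θ⟩ ⟨by simpa using hs.1, le_sub_iff_add_le'.1 hs.2⟩ using 4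
  · simp
  · simp only
    ring

lemma fderiv_one_pos (hrefl : ReflectionLE w T l) (hl : l < T)
    (hw : ∀ z : ℂ, z.re ≤ T → ContDiffAt ℝ 2 w z)
    (hper : Function.Periodic w (2 * Real.pi * Complex.I))
    (hΔ : ∀ z z' : ℂ, z.re ≤ z'.re → z'.re ≤ T → z.im = z'.im → w z ≤ w z' → Δ w z' ≤ Δ w z)
    (hbd : ∀ θ, w ⟨2 * l - T, θ⟩ < w ⟨T, θ⟩) (θ : ℝ) : 0 < fderiv ℝ w ⟨l, θ⟩ 1 := by
  obtain ⟨ε, hε, hle⟩ := hrefl.exists_pos_mul_le_sub hl hw hper hΔ hbd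
  have h : ε ≤ 2 * fderiv ℝ w ⟨l, θ⟩ 1 := by
    refine le_two_mul_fderiv_of_eventually ((hw _ hl.le).differentiableAt (by norm_num)) ?_
    filter_upwards [Ioo_mem_nhdsGT (sub_pos.2 hl)] with s hs
    convert hle s (Ioo_subset_Icc_self hs) θ using 3 <;> apply Complex.ext <;> simp [sub_eq_add_neg]
  linarith

lemma eventually_nhdsGT (hrefl : ReflectionLE w T l) (hl : l < T)
    (hw : ∀ z : ℂ, z.re ≤ T → ContDiffAt ℝ 2 w z)
    (hper : Function.Periodic w (2 * Real.pi * Complex.I))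
    (hΔ : ∀ z z' : ℂ, z.re ≤ z'.re → z'.re ≤ T → z.im = z'.im → w z ≤ w z' → Δ w z' ≤ Δ w z)
    (hbd : ∀ θ, w ⟨2 * l - T, θ⟩ < w ⟨T, θ⟩) : ∀ᶠ l' in 𝓝[>] l, ReflectionLE w T l' := by
  have hlocal (p : ℝ × ℝ) (hp : p ∈ Icc 0 (T - l) ×ˢ Icc 0 (2 * Real.pi)) :
      ∀ᶠ q : ℝ × ℝ × ℝ in 𝓝 (l, p),
        0 ≤ q.2.1 → w ⟨q.1 - q.2.1, q.2.2⟩ ≤ w ⟨q.1 + q.2.1, q.2.2⟩ := by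
    obtain ⟨s, θ⟩ := p
    obtain ⟨ε, hε, hle⟩ := hrefl.exists_pos_mul_le_sub hl hw hper hΔ hbd
    have hleft : Continuous fun q : ℝ × ℝ × ℝ ↦ (⟨q.1 - q.2.1, q.2.2⟩ : ℂ) :=
      continuous_complex_mk (by fun_prop) (by fun_prop)
    have hright : Continuous fun q : ℝ × ℝ × ℝ ↦ (⟨q.1 + q.2.1, q.2.2⟩ : ℂ) :=
      continuous_complex_mk (by fun_prop) (by fun_prop)
    obtain rfl | hs := eq_or_lt_of_le hp.1.1
    · exact eventually_reflection_le_of_fderiv_one_pos ((hw ⟨l, θ⟩ hl.le).of_le one_le_two)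
        (hrefl.fderiv_one_pos hl hw hper hΔ hbd θ)
    · have hlt : w ⟨l - s, θ⟩ < w ⟨l + s, θ⟩ := by
        linarith [hle s hp.1 θ, mul_pos hε hs]
      have hright' : l + s ≤ T := by linarith [hp.1.2]
      filter_upwards [((hw ⟨l - s, θ⟩ (by simp only; linarith)).continuousAt.comp_of_eq
        hleft.continuousAt rfl).eventually_lt ((hw ⟨l + s, θ⟩ hright').continuousAt.comp_of_eq
          hright.continuousAt rfl) hlt] with q hq _ using hq.le
  have hcompact := (isCompact_Icc.prod isCompact_Icc).eventually_forall_of_forall_eventually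
    (P := fun (l' : ℝ) (p : ℝ × ℝ) ↦ 0 ≤ p.1 → w ⟨l' - p.1, p.2⟩ ≤ w ⟨l' + p.1, p.2⟩) hlocal
  filter_upwards [nhdsWithin_le_nhds hcompact, self_mem_nhdsWithin] with l' hl' hll' s hs θ
  obtain ⟨φ, hφ, heq⟩ := exists_mem_Icc_forall_eq_of_periodic hper θ
  rw [heq, heq]
  exact hl' (s, φ) ⟨⟨hs.1, hs.2.trans (sub_le_sub_left (le_of_lt hll') T)⟩, hφ⟩ hs.1

end ReflectionLE

lemma isClosed_setOf_reflectionLE_inter_Icc {a b : ℝ} (hb : b ≤ T)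
    (hw : ContinuousOn w (Complex.re ⁻¹' Iic T)) :
    IsClosed ({l | ReflectionLE w T l} ∩ Icc a b) := by
  have heq : {l | ReflectionLE w T l} ∩ Icc a b = ⋂ s ∈ Ici (0 : ℝ), ⋂ θ : ℝ,
      {l ∈ Icc a b | w ⟨l - min s (T - l), θ⟩ ≤ w ⟨l + min s (T - l), θ⟩} := by
    ext l
    simp only [mem_inter_iff, mem_ofPred_eq, mem_iInter, mem_Ici]
    refine ⟨fun ⟨hrefl, hl⟩ s hs θ ↦ ⟨hl, hrefl _ ⟨le_min hs ?_, min_le_right _ _⟩ θ⟩,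
      fun h ↦ ⟨fun s hs θ ↦ ?_, (h 0 le_rfl 0).1⟩⟩
    · linarith [hl.2]
    · simpa only [min_eq_left hs.2] using (h s hs.1 θ).2
  rw [heq]
  refine isClosed_biInter fun s hs ↦ isClosed_iInter fun θ ↦ isClosed_Icc.isClosed_le
    (hw.comp (continuous_complex_mk (by fun_prop) continuous_const).continuousOn fun l hl ↦ ?_)
    (hw.comp (continuous_complex_mk (by fun_prop) continuous_const).continuousOn fun l _ ↦ ?_)
  · have hmin : 0 ≤ min s (T - l) := le_min hs (by linarith [hl.2])
    change l - min s (T - l) ≤ T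
    linarith [hl.2]
  · change l + min s (T - l) ≤ T
    linarith [min_le_right s (T - l)]

theorem fderiv_one_nonneg_of_moving_planes {L : ℝ} (hL : L < T)
    (hw : ∀ z : ℂ, z.re ≤ T → ContDiffAt ℝ 2 w z)
    (hper : Function.Periodic w (2 * Real.pi * Complex.I))
    (hΔ : ∀ z z' : ℂ, z.re ≤ z'.re → z'.re ≤ T → z.im = z'.im → w z ≤ w z' → Δ w z' ≤ Δ w z)
    (hlim : Tendsto w (comap Complex.re atBot) atBot)
    (hderiv : ∀ᶠ z in comap Complex.re atBot, 0 ≤ fderiv ℝ w z 1)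
    (hbd : ∀ l ≤ L, ∀ θ, w ⟨2 * l - T, θ⟩ < w ⟨T, θ⟩) {z : ℂ} (hz : z.re ≤ L) :
    0 ≤ fderiv ℝ w z 1 := by
  obtain ⟨l₀, hl₀⟩ := exists_forall_le_reflectionLE hw hper hlim hderiv
  have hclosed := isClosed_setOf_reflectionLE_inter_Icc (a := l₀) hL.le
    fun z hz ↦ (hw z hz).continuousAt.continuousWithinAt
  have hrefl : ∀ l ≤ L, ReflectionLE w T l := fun l hl ↦ (le_total l l₀).elim (hl₀ l) fun hll ↦
    hclosed.Icc_subset_of_forall_mem_nhdsWithin (hl₀ l₀ le_rfl)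
      (fun l h ↦ h.1.eventually_nhdsGT (h.2.2.trans hL) hw hper hΔ (hbd l h.2.2.le)) ⟨hll, hl⟩
  exact ((hrefl z.re hz).fderiv_one_pos (hz.trans_lt hL) hw hper hΔ (hbd _ hz) z.im).le

end MovingPlane

section CylMean

open Set Topology InnerProductSpace Laplacian

variable {f g : ℂ → ℝ} {t T : ℝ}

/-- The mean of `f` over the circle `re z = t` of the cylinder `ℂ / 2πiℤ`. -/
noncomputable def cylMean (f : ℂ → ℝ) (t : ℝ) : ℝ :=
  ⨍ θ in (0 : ℝ)..2 * Real.pi, f ⟨t, θ⟩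

lemma cylMean_eq (f : ℂ → ℝ) (t : ℝ) :
    cylMean f t = (2 * Real.pi)⁻¹ * ∫ θ in (0 : ℝ)..2 * Real.pi, f ⟨t, θ⟩ := by
  rw [cylMean, interval_average_eq, sub_zero, smul_eq_mul]

lemma continuous_verticalLine (hf : ∀ z : ℂ, z.re = t → ContinuousAt f z) :
    Continuous fun θ : ℝ ↦ f ⟨t, θ⟩ :=
  continuous_iff_continuousAt.2 fun θ ↦ (hf ⟨t, θ⟩ rfl).comp_of_eq
    (continuous_complex_mk continuous_const continuous_id).continuousAt rfl

lemma cylMean_const (c t : ℝ) : cylMean (fun _ ↦ c) t = c := by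
  rw [cylMean_eq, intervalIntegral.integral_const, sub_zero, smul_eq_mul]
  field_simp

lemma cylMean_const_mul (k : ℝ) (f : ℂ → ℝ) (t : ℝ) :
    cylMean (fun z ↦ k * f z) t = k * cylMean f t := by
  rw [cylMean_eq, cylMean_eq, intervalIntegral.integral_const_mul]
  ring

lemma cylMean_sub_comp_re (hf : ∀ z : ℂ, z.re = t → ContinuousAt f z) (h : ℝ → ℝ) :
    cylMean (fun z ↦ f z - h z.re) t = cylMean f t - h t := by
  simp only [cylMean_eq]
  rw [intervalIntegral.integral_sub
    ((continuous_verticalLine hf).intervalIntegrable _ _) intervalIntegrable_const,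
    intervalIntegral.integral_const, sub_zero, smul_eq_mul]
  field_simp

lemma cylMean_mono (hf : ∀ z : ℂ, z.re = t → ContinuousAt f z)
    (hg : ∀ z : ℂ, z.re = t → ContinuousAt g z) (hfg : ∀ z : ℂ, z.re = t → f z ≤ g z) :
    cylMean f t ≤ cylMean g t := by
  rw [cylMean_eq, cylMean_eq]
  gcongr
  exact intervalIntegral.integral_mono Real.two_pi_pos.le
    ((continuous_verticalLine hf).intervalIntegrable _ _)
    ((continuous_verticalLine hg).intervalIntegrable _ _) fun θ ↦ hfg ⟨t, θ⟩ rfl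

lemma exp_cylMean_le (hf : ∀ z : ℂ, z.re = t → ContinuousAt f z) :
    Real.exp (cylMean f t) ≤ cylMean (fun z ↦ Real.exp (f z)) t := by
  have hcont := continuous_verticalLine hf
  refine convexOn_exp.map_set_average_le Real.continuous_exp.continuousOn isClosed_univ ?_ ?_ ?_
    (hcont.intervalIntegrable _ _).def'
    ((Real.continuous_exp.comp hcont).intervalIntegrable _ _).def'
  · simp
  · exact measure_Ioc_lt_top.ne
  · simp

lemma tendsto_cylMean_atBot {c : ℝ} (hf : ∀ z : ℂ, z.re ≤ T → ContinuousAt f z)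
    (hlim : Tendsto f (comap Complex.re atBot) (𝓝 c)) : Tendsto (cylMean f) atBot (𝓝 c) := by
  rw [Metric.nhds_basis_closedBall.tendsto_right_iff]
  intro ε hε
  obtain ⟨t₀, ht₀⟩ := eventually_comap_re_atBot.1 (hlim (Metric.closedBall_mem_nhds c hε))
  filter_upwards [eventually_le_atBot t₀, eventually_le_atBot T] with t htt₀ htT
  have hft (z : ℂ) (hz : z.re = t) : ContinuousAt f z := hf z (hz.trans_le htT)
  have hball (z : ℂ) (hz : z.re = t) : f z ∈ Icc (c - ε) (c + ε) := by
    simpa only [Real.closedBall_eq_Icc] using ht₀ z (hz.trans_le htt₀)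
  rw [Real.closedBall_eq_Icc, ← cylMean_const (c - ε) t, ← cylMean_const (c + ε) t]
  exact ⟨cylMean_mono (fun _ _ ↦ continuousAt_const) hft fun z hz ↦ (hball z hz).1,
    cylMean_mono hft (fun _ _ ↦ continuousAt_const) fun z hz ↦ (hball z hz).2⟩

lemma hasDerivAt_cylMean (hf : ∀ z : ℂ, z.re ≤ T → ContDiffAt ℝ 1 f z) (ht : t < T) :
    HasDerivAt (cylMean f) (cylMean (fun z ↦ fderiv ℝ f z 1) t) t := by
  have hcont (z : ℂ) (hz : z.re ≤ T) : ContinuousAt (fun z ↦ fderiv ℝ f z 1) z :=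
    ((hf z hz).continuousAt_fderiv one_ne_zero).clm_apply continuousAt_const
  obtain ⟨C, hC⟩ := (isCompact_Icc.reProdIm isCompact_Icc).exists_bound_of_continuousOn
    (s := Icc (t - 1) T ×ℂ Icc 0 (2 * Real.pi)) fun z hz ↦ (hcont z hz.1.2).continuousWithinAt
  have hnhds : Ioo (t - 1) T ∈ 𝓝 t := Ioo_mem_nhds (sub_one_lt t) ht
  have hline {s : ℝ} (hs : s ∈ Ioo (t - 1) T) : Continuous fun θ : ℝ ↦ f ⟨s, θ⟩ :=
    continuous_verticalLine fun z hz ↦ (hf z (hz.trans_le hs.2.le)).continuousAt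
  have hline' : Continuous fun θ : ℝ ↦ fderiv ℝ f ⟨t, θ⟩ 1 :=
    continuous_verticalLine (f := fun z ↦ fderiv ℝ f z 1) fun z hz ↦ hcont z (hz.trans_le ht.le)
  have hint := (intervalIntegral.hasDerivAt_integral_of_dominated_loc_of_deriv_le
    (F := fun s θ ↦ f ⟨s, θ⟩) (F' := fun s θ ↦ fderiv ℝ f ⟨s, θ⟩ 1) (bound := fun _ ↦ C)
    (μ := volume) (a := 0) (b := 2 * Real.pi) hnhds
    (by filter_upwards [hnhds] with s hs using (hline hs).aestronglyMeasurable)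
    ((hline ⟨sub_one_lt t, ht⟩).intervalIntegrable _ _) hline'.aestronglyMeasurable
    (Eventually.of_forall fun θ hθ s hs ↦ hC _ ⟨Ioo_subset_Icc_self hs, ?_⟩)
    intervalIntegrable_const
    (Eventually.of_forall fun θ _ s hs ↦ ?_)).2
  · simp only [funext (cylMean_eq f), cylMean_eq]
    exact hint.const_mul _
  · rw [uIoc_of_le Real.two_pi_pos.le] at hθ
    exact Ioc_subset_Icc_self hθ
  · exact hasDerivAt_horizontalLine ((hf _ hs.2.le).differentiableAt one_ne_zero)

lemma hasDerivAt_verticalLine {θ : ℝ} (hf : DifferentiableAt ℝ f ⟨t, θ⟩) :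
    HasDerivAt (fun φ : ℝ ↦ f ⟨t, φ⟩) (fderiv ℝ f ⟨t, θ⟩ Complex.I) θ := by
  have hpoint (φ : ℝ) : (⟨t, 0⟩ : ℂ) + φ • Complex.I = ⟨t, φ⟩ := by apply Complex.ext <;> simp
  simpa only [hpoint] using hasDerivAt_comp_add_smul (f := f) (x := ⟨t, 0⟩) (v := Complex.I)
    (s := θ) (by rwa [hpoint])

lemma cylMean_fderiv_I_eq_zero (hf : ∀ z : ℂ, z.re = t → ContDiffAt ℝ 1 f z)
    (hper : Function.Periodic f (2 * Real.pi * Complex.I)) :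
    cylMean (fun z ↦ fderiv ℝ f z Complex.I) t = 0 := by
  have hcont : Continuous fun θ : ℝ ↦ fderiv ℝ f ⟨t, θ⟩ Complex.I :=
    continuous_verticalLine (f := fun z ↦ fderiv ℝ f z Complex.I) fun z hz ↦
      ((hf z hz).continuousAt_fderiv one_ne_zero).clm_apply continuousAt_const
  have hderiv (θ : ℝ) : HasDerivAt (fun φ : ℝ ↦ f ⟨t, φ⟩) (fderiv ℝ f ⟨t, θ⟩ Complex.I) θ :=
    hasDerivAt_verticalLine ((hf ⟨t, θ⟩ rfl).differentiableAt one_ne_zero)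
  rw [cylMean_eq, intervalIntegral.integral_eq_sub_of_hasDerivAt (fun θ _ ↦ hderiv θ)
    (hcont.intervalIntegrable _ _)]
  have hend : f ⟨t, 2 * Real.pi⟩ = f ⟨t, 0⟩ :=
    (congrArg f (by apply Complex.ext <;> simp)).trans (hper ⟨t, 0⟩)
  rw [hend, sub_self, mul_zero]

lemma hasDerivAt_cylMean_fderiv_one (hf : ∀ z : ℂ, z.re ≤ T → ContDiffAt ℝ 2 f z)
    (hper : Function.Periodic f (2 * Real.pi * Complex.I)) (ht : t < T) :
    HasDerivAt (cylMean fun z ↦ fderiv ℝ f z 1) (cylMean (Δ f) t) t := by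
  have hC1 (v z : ℂ) (hz : z.re ≤ T) : ContDiffAt ℝ 1 (fun y ↦ fderiv ℝ f y v) z :=
    ((hf z hz).fderiv_right (m := 1) (by norm_num)).clm_apply contDiffAt_const
  have hperI : Function.Periodic (fun z ↦ fderiv ℝ f z Complex.I) (2 * Real.pi * Complex.I) := by
    intro z
    have h := fderiv_comp_add_right (𝕜 := ℝ) (f := f) (x := z) (2 * Real.pi * Complex.I)
    rw [funext hper] at h
    exact congrArg (fun M ↦ M Complex.I) h.symm
  have hcont (v : ℂ) : Continuous fun θ : ℝ ↦ fderiv ℝ (fun y ↦ fderiv ℝ f y v) ⟨t, θ⟩ v :=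
    continuous_verticalLine (f := fun z ↦ fderiv ℝ (fun y ↦ fderiv ℝ f y v) z v) fun z hz ↦
      ((hC1 v z (hz.trans_le ht.le)).continuousAt_fderiv one_ne_zero).clm_apply continuousAt_const
  refine (hasDerivAt_cylMean (hC1 1) ht).congr_deriv ?_
  have hzero := cylMean_fderiv_I_eq_zero (fun z hz ↦ hC1 Complex.I z (hz.trans_le ht.le)) hperI
  rw [cylMean_eq] at hzero ⊢
  have hΔ (θ : ℝ) : Δ f ⟨t, θ⟩ = fderiv ℝ (fun y ↦ fderiv ℝ f y 1) ⟨t, θ⟩ 1 +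
      fderiv ℝ (fun y ↦ fderiv ℝ f y Complex.I) ⟨t, θ⟩ Complex.I := by
    have hd := differentiableAt_fderiv_of_contDiffAt_two (hf ⟨t, θ⟩ ht.le)
    rw [laplacian_eq_fderiv_fderiv_complexPlane, fderiv_fderiv_apply hd, fderiv_fderiv_apply hd]
  simp only [cylMean_eq, hΔ]
  rw [intervalIntegral.integral_add ((hcont 1).intervalIntegrable _ _)
    ((hcont Complex.I).intervalIntegrable _ _), mul_add, hzero, add_zero]

end CylMean

section RadialODE

open Set Topology

lemma le_of_tendsto_atBot_of_deriv_nonneg {h h' : ℝ → ℝ} {t L : ℝ}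
    (hd : ∀ s ≤ t, HasDerivAt h (h' s) s) (hnonneg : ∀ s ≤ t, 0 ≤ h' s)
    (hlim : Tendsto h atBot (𝓝 L)) : L ≤ h t := by
  have hmono : MonotoneOn h (Iic t) := monotoneOn_of_hasDerivWithinAt_nonneg (convex_Iic t)
    (fun s hs ↦ (hd s hs).continuousAt.continuousWithinAt)
    (fun s hs ↦ (hd s (interior_subset (s := Iic t) hs)).hasDerivWithinAt)
    (fun s hs ↦ hnonneg s (interior_subset (s := Iic t) hs))
  refine le_of_tendsto hlim ?_
  filter_upwards [eventually_le_atBot t] with s hs using hmono hs self_mem_Iic hs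

lemma tendsto_const_mul_exp_atBot (b τ : ℝ) :
    Tendsto (fun t ↦ b * Real.exp (2 * (t - τ))) atBot (𝓝 0) := by
  have hlin : Tendsto (fun t ↦ 2 * (t - τ)) atBot atBot :=
    (tendsto_atBot_add_const_right _ (-τ) tendsto_id).const_mul_atBot two_pos
  simpa using (Real.tendsto_exp_atBot.comp hlin).const_mul b

variable {g g' g'' : ℝ → ℝ} {a b τ C : ℝ}

lemma neg_le_of_neg_exp_le_deriv_deriv (hg : ∀ t ≤ τ, HasDerivAt g (g' t) t)
    (hg' : ∀ t ≤ τ, HasDerivAt g' (g'' t) t) (hlim' : Tendsto g' atBot (𝓝 2))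
    (hlim : Tendsto (fun t ↦ g t - 2 * (t - τ)) atBot (𝓝 0))
    (hlower : ∀ t ≤ τ, -(4 * b * Real.exp (2 * (t - τ))) ≤ g'' t) : -b ≤ g τ := by
  have hexp (c t : ℝ) : HasDerivAt (fun t ↦ c * Real.exp (2 * (t - τ)))
      (2 * c * Real.exp (2 * (t - τ))) t :=
    ((((hasDerivAt_id' t).sub_const τ).const_mul 2).exp.const_mul c).congr_deriv (by ring)
  have hderiv (t : ℝ) (ht : t ≤ τ) : 2 ≤ g' t + 2 * b * Real.exp (2 * (t - τ)) := by
    refine le_of_tendsto_atBot_of_deriv_nonneg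
      (h := fun s ↦ g' s + 2 * b * Real.exp (2 * (s - τ)))
      (fun s hs ↦ (hg' s (hs.trans ht)).add (hexp (2 * b) s)) (fun s hs ↦ ?_)
      (by simpa using hlim'.add (tendsto_const_mul_exp_atBot (2 * b) τ))
    linarith [hlower s (hs.trans ht)]
  have hval : 0 ≤ g τ - 2 * (τ - τ) + b * Real.exp (2 * (τ - τ)) := by
    refine le_of_tendsto_atBot_of_deriv_nonneg (t := τ)
      (h := fun s ↦ g s - 2 * (s - τ) + b * Real.exp (2 * (s - τ)))
      (fun s hs ↦ ((hg s hs).sub (((hasDerivAt_id' s).sub_const τ).const_mul 2)).add (hexp b s))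
      (fun s hs ↦ ?_) (by simpa using hlim.add (tendsto_const_mul_exp_atBot b τ))
    linarith [hderiv s hs]
  simp only [sub_self, mul_zero, Real.exp_zero] at hval
  linarith

lemma mul_exp_mul_le_two_of_deriv_nonneg (ha : 0 < a) (hC : 0 ≤ C)
    (hg : ∀ t ≤ τ + C, HasDerivAt g (g' t) t) (hg' : ∀ t ≤ τ + C, HasDerivAt g' (g'' t) t)
    (hlim' : Tendsto g' atBot (𝓝 2)) (hlim : Tendsto (fun t ↦ g t - 2 * (t - τ)) atBot (𝓝 0))
    (hlower : ∀ t ≤ τ, -(4 * b * Real.exp (2 * (t - τ))) ≤ g'' t)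
    (hupper : ∀ t ≤ τ + C, g'' t ≤ -(a * Real.exp (g t))) (hnonneg : ∀ t ≤ τ + C, 0 ≤ g' t) :
    a * Real.exp (-b) * C ≤ 2 := by
  have hτ : τ ≤ τ + C := le_add_of_nonneg_right hC
  have hinit : -b ≤ g τ := neg_le_of_neg_exp_le_deriv_deriv (fun t ht ↦ hg t (ht.trans hτ))
    (fun t ht ↦ hg' t (ht.trans hτ)) hlim' hlim hlower
  have hslope : g' τ ≤ 2 := by
    refine neg_le_neg_iff.1 (le_of_tendsto_atBot_of_deriv_nonneg (h := fun s ↦ -g' s)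
      (fun s hs ↦ (hg' s (hs.trans hτ)).neg) (fun s hs ↦ ?_) hlim'.neg)
    linarith [hupper s (hs.trans hτ), mul_pos ha (Real.exp_pos (g s))]
  have hmono : MonotoneOn g (Icc τ (τ + C)) := monotoneOn_of_hasDerivWithinAt_nonneg
    (convex_Icc _ _) (fun t ht ↦ (hg t ht.2).continuousAt.continuousWithinAt)
    (fun t ht ↦ (hg t (interior_subset ht).2).hasDerivWithinAt)
    (fun t ht ↦ hnonneg t (interior_subset ht).2)
  have hanti : AntitoneOn (fun t ↦ g' t + a * Real.exp (-b) * t) (Icc τ (τ + C)) := by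
    refine antitoneOn_of_hasDerivWithinAt_nonpos (convex_Icc _ _)
      (fun t ht ↦ ((hg' t ht.2).add ((hasDerivAt_id' t).const_mul
        _)).continuousAt.continuousWithinAt)
      (fun t ht ↦ ((hg' t (interior_subset ht).2).add ((hasDerivAt_id' t).const_mul
        _)).hasDerivWithinAt) (fun t ht ↦ ?_)
    have ht' := interior_subset ht
    have hgt : -b ≤ g t := hinit.trans (hmono ⟨le_rfl, hτ⟩ ht' ht'.1)
    have hexp : a * Real.exp (-b) ≤ a * Real.exp (g t) := by gcongr
    linarith [hupper t ht'.2]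
  have hend := hanti ⟨le_rfl, hτ⟩ ⟨hτ, le_rfl⟩ hτ
  simp only at hend
  linarith [hnonneg (τ + C) le_rfl]

end RadialODE

section CylLift

open Set Topology InnerProductSpace Laplacian

variable {u : ℂ → ℝ} {c z : ℂ}

lemma norm_exp_sub_exp_of_im_eq {z z' : ℂ} (h : z.im = z'.im) :
    ‖Complex.exp z - Complex.exp z'‖ = |Real.exp z.re - Real.exp z'.re| := by
  have hpolar (y : ℂ) :
      Complex.exp y = (Real.exp y.re : ℝ) * Complex.exp (y.im * Complex.I) := by
    rw [Complex.ofReal_exp, ← Complex.exp_add, Complex.re_add_im]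
  rw [hpolar z, hpolar z', h, ← sub_mul, norm_mul, Complex.norm_exp_ofReal_mul_I, mul_one,
    ← Complex.ofReal_sub, Complex.norm_real, Real.norm_eq_abs]

lemma add_exp_mem_closedBall {R : ℝ} (hR : 0 < R) (hz : z.re ≤ Real.log R) :
    c + Complex.exp z ∈ closedBall c R := by
  rwa [mem_closedBall, dist_self_add_left, Complex.norm_exp, ← Real.le_log_iff_exp_le hR]

/-- The Emden–Fowler transform of `u` at `c`: log-polar coordinates around `c` turn
`-Δ u = V e ^ u` on a disc into an equation `-Δ w = V e ^ w` of the same form on a half-cylinder,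
which is represented here by functions on `ℂ` of period `2πi`. -/
noncomputable def cylLift (u : ℂ → ℝ) (c z : ℂ) : ℝ :=
  u (c + Complex.exp z) + 2 * z.re

lemma cylLift_periodic (u : ℂ → ℝ) (c : ℂ) :
    Function.Periodic (cylLift u c) (2 * Real.pi * Complex.I) := by
  intro z
  simp [cylLift, Complex.exp_periodic z]

lemma exp_cylLift (u : ℂ → ℝ) (c z : ℂ) :
    Real.exp (cylLift u c z) = Real.exp (2 * z.re) * Real.exp (u (c + Complex.exp z)) := by
  rw [cylLift, add_comm, Real.exp_add]

lemma contDiffAt_cylLift (hu : ContDiffAt ℝ 2 u (c + Complex.exp z)) :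
    ContDiffAt ℝ 2 (cylLift u c) z :=
  (hu.comp z (by fun_prop)).add (contDiffAt_const.mul Complex.reCLM.contDiff.contDiffAt)

lemma laplacian_cylLift (hu : ContDiffAt ℝ 2 u (c + Complex.exp z)) :
    Δ (cylLift u c) z = Real.exp (2 * z.re) * Δ u (c + Complex.exp z) := by
  have hre : Δ (fun y : ℂ ↦ 2 * y.re) z = 0 := by
    rw [laplacian_comp_re (g := fun t ↦ 2 * t) (by fun_prop)]
    simp
  have hexp : deriv (fun y ↦ c + Complex.exp y) z = Complex.exp z :=
    ((Complex.hasDerivAt_exp z).const_add c).deriv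
  have hnorm : ‖Complex.exp z‖ ^ 2 = Real.exp (2 * z.re) := by
    rw [Complex.norm_exp, ← Real.exp_nat_mul, Nat.cast_ofNat]
  refine (ContDiffAt.laplacian_add (hu.comp z (by fun_prop))
    (contDiffAt_const.mul Complex.reCLM.contDiff.contDiffAt)).trans ?_
  refine (congrArg₂ (· + ·) (laplacian_comp_of_differentiable (f := fun y ↦ c + Complex.exp y)
    (by fun_prop) hu) hre).trans ?_
  rw [hexp, hnorm, add_zero]

lemma fderiv_cylLift (hu : DifferentiableAt ℝ u (c + Complex.exp z)) :
    fderiv ℝ (cylLift u c) z 1 = fderiv ℝ u (c + Complex.exp z) (Complex.exp z) + 2 := by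
  have hexp : HasFDerivAt (fun y ↦ c + Complex.exp y) _ z :=
    ((Complex.hasDerivAt_exp z).const_add c).complexToReal_fderiv
  have h : HasFDerivAt (cylLift u c) _ z :=
    (hu.hasFDerivAt.comp z hexp).add (Complex.reCLM.hasFDerivAt.const_mul 2)
  rw [h.fderiv]
  simp

lemma tendsto_add_exp (c : ℂ) :
    Tendsto (fun z ↦ c + Complex.exp z) (comap Complex.re atBot) (𝓝 c) := by
  simpa using Complex.tendsto_exp_comap_re_atBot.const_add c

lemma tendsto_cylLift_sub (hu : ContinuousAt u c) :
    Tendsto (fun z ↦ cylLift u c z - 2 * z.re) (comap Complex.re atBot) (𝓝 (u c)) := by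
  simpa only [cylLift, add_sub_cancel_right, Function.comp_def]
    using hu.tendsto.comp (tendsto_add_exp c)

lemma tendsto_fderiv_cylLift (hu : ContDiffAt ℝ 1 u c) :
    Tendsto (fun z ↦ fderiv ℝ (cylLift u c) z 1) (comap Complex.re atBot) (𝓝 2) := by
  have happly : ContinuousAt (fun p : ℂ × ℂ ↦ fderiv ℝ u p.1 p.2) (c, 0) :=
    ((hu.continuousAt_fderiv one_ne_zero).comp_of_eq continuousAt_fst rfl).clm_apply
      continuousAt_snd
  have hlim : Tendsto (fun z ↦ fderiv ℝ u (c + Complex.exp z) (Complex.exp z) + 2)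
      (comap Complex.re atBot) (𝓝 2) := by
    simpa only [map_zero, zero_add, Function.comp_def] using (happly.tendsto.comp
      ((tendsto_add_exp c).prodMk_nhds Complex.tendsto_exp_comap_re_atBot)).add_const 2
  refine hlim.congr' ?_
  filter_upwards [(tendsto_add_exp c).eventually (hu.eventually (by simp))] with z hz
  exact (fderiv_cylLift (hz.differentiableAt one_ne_zero)).symm

lemma tendsto_cylMean_cylLift_sub {T : ℝ} (hw : ∀ z : ℂ, z.re ≤ T → ContinuousAt (cylLift u c) z)
    (hu : ContinuousAt u c) :
    Tendsto (fun t ↦ cylMean (cylLift u c) t - 2 * t) atBot (𝓝 (u c)) := by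
  have hsub (z : ℂ) (hz : z.re ≤ T) : ContinuousAt (fun y ↦ cylLift u c y - 2 * y.re) z :=
    (hw z hz).sub (by fun_prop)
  refine (tendsto_cylMean_atBot hsub (tendsto_cylLift_sub hu)).congr' ?_
  filter_upwards [eventually_le_atBot T] with t ht
  exact cylMean_sub_comp_re (h := fun t ↦ 2 * t) fun z hz ↦ hw z (hz.trans_le ht)

end CylLift

section Selection

lemma two_mul_log_add_le_of_sq_mul_exp_le {p q x y : ℝ} (hp : 0 < p) (hq : 0 < q)
    (h : p ^ 2 * Real.exp x ≤ q ^ 2 * Real.exp y) : 2 * Real.log p + x ≤ 2 * Real.log q + y := by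
  have hexp {p : ℝ} (hp : 0 < p) (x : ℝ) :
      p ^ 2 * Real.exp x = Real.exp (2 * Real.log p + x) := by
    rw [two_mul, Real.exp_add, Real.exp_add, Real.exp_log hp, sq]
  rwa [hexp hp, hexp hq, Real.exp_le_exp] at h

lemma log_div_two_eq {d : ℝ} (hd : d ≠ 0) : Real.log (d / 2) = Real.log d - Real.log 4 / 2 := by
  rw [Real.log_div hd two_ne_zero, show (4 : ℝ) = 2 ^ 2 by norm_num, Real.log_pow]
  push_cast
  ring

-- `y` maximises `(R - dist y x) ^ 2 * exp (u y)`, the scale-invariant quantity of the problem.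
lemma exists_forall_mem_closedBall_half_le_add_log_four {X : Type*} [PseudoMetricSpace X]
    [ProperSpace X] {u : X → ℝ} {x : X} {R : ℝ} (hR : 0 < R)
    (hu : ContinuousOn u (closedBall x R)) :
    ∃ (y : X) (d : ℝ), 0 < d ∧ dist y x + d = R ∧
      2 * Real.log R + u x ≤ 2 * Real.log d + u y ∧
      ∀ z ∈ closedBall y (d / 2), u z ≤ u y + Real.log 4 := by
  have hcont : ContinuousOn (fun z ↦ (R - dist z x) ^ 2 * Real.exp (u z)) (closedBall x R) := by
    fun_prop
  obtain ⟨y, hy, hmax⟩ := (isCompact_closedBall x R).exists_isMaxOn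
    ⟨x, mem_closedBall_self hR.le⟩ hcont
  have hcenter : R ^ 2 * Real.exp (u x) ≤ (R - dist y x) ^ 2 * Real.exp (u y) := by
    simpa using hmax (mem_closedBall_self hR.le)
  have hd : 0 < R - dist y x := by
    refine (sub_nonneg.2 hy).lt_of_ne' fun hzero ↦ ?_
    rw [hzero, zero_pow two_ne_zero, zero_mul] at hcenter
    exact hcenter.not_gt (by positivity)
  refine ⟨y, R - dist y x, hd, add_sub_cancel _ _,
    two_mul_log_add_le_of_sq_mul_exp_le hR hd hcenter, fun z hz ↦ ?_⟩
  rw [mem_closedBall] at hz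
  have hdist : (R - dist y x) / 2 ≤ R - dist z x := by linarith [dist_triangle z y x]
  have hzR : z ∈ closedBall x R := by
    rw [mem_closedBall]
    linarith
  have hle : ((R - dist y x) / 2) ^ 2 * Real.exp (u z) ≤ (R - dist y x) ^ 2 * Real.exp (u y) :=
    le_trans (by gcongr) (isMaxOn_iff.1 hmax z hzR)
  have hlog := two_mul_log_add_le_of_sq_mul_exp_le (half_pos hd) hd hle
  rw [log_div_two_eq hd.ne'] at hlog
  linarith

end Selection

section SupInf

open Set Topology InnerProductSpace Laplacian

variable {a b A C M R r : ℝ} {V u : ℂ → ℝ} {c z : ℂ} {s t : Set ℂ}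

/-- `u` is a `C²` solution on `s` of the Liouville equation `-Δ u = V e ^ u` whose coefficient `V`
takes values in `[a, b]` and is `A`-Lipschitz on `s`. -/
structure IsLiouvilleSolution (a b A : ℝ) (V u : ℂ → ℝ) (s : Set ℂ) : Prop where
  contDiffAt : ∀ z ∈ s, ContDiffAt ℝ 2 u z
  coeff_mem_Icc : ∀ z ∈ s, V z ∈ Icc a b
  abs_coeff_sub_le : ∀ z ∈ s, ∀ z' ∈ s, |V z - V z'| ≤ A * ‖z - z'‖
  neg_laplacian_eq : ∀ z ∈ s, -Δ u z = V z * Real.exp (u z)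

-- The increment `p - q ≤ A * d` costs a factor `p / q ≤ 1 + A / a * d ≤ exp (A / a * d)`.
lemma mul_exp_le_mul_exp_of_le_add {p q d x y : ℝ} (ha : 0 < a) (haq : a ≤ q) (hA : 0 ≤ A)
    (hd : 0 ≤ d) (hpq : p ≤ q + A * d) (hxy : x + A / a * d ≤ y) :
    p * Real.exp x ≤ q * Real.exp y := by
  have hq : 0 < q := ha.trans_le haq
  have hratio : A * d ≤ q * (A / a * d) := by
    calc A * d = a * (A / a * d) := by field_simp
      _ ≤ q * (A / a * d) := by gcongr
  calc p * Real.exp x ≤ q * (A / a * d + 1) * Real.exp x := by gcongr; linarith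
    _ ≤ q * Real.exp (A / a * d) * Real.exp x := by gcongr; exact Real.add_one_le_exp _
    _ = q * Real.exp (x + A / a * d) := by rw [Real.exp_add]; ring
    _ ≤ q * Real.exp y := by gcongr

/-- The Emden–Fowler transform with a multiple of `e ^ re z` subtracted. The extra term compensates
for the oscillation of the coefficient, which makes the moving plane method applicable. -/
noncomputable def compensatedCylLift (u : ℂ → ℝ) (c : ℂ) (k : ℝ) (z : ℂ) : ℝ :=
  cylLift u c z - k * Real.exp z.re

lemma contDiffAt_mul_exp_re (k : ℝ) (z : ℂ) :
    ContDiffAt ℝ 2 (fun y : ℂ ↦ k * Real.exp y.re) z :=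
  contDiffAt_const.mul (Real.contDiff_exp.comp Complex.reCLM.contDiff).contDiffAt

lemma contDiffAt_compensatedCylLift (k : ℝ) (hu : ContDiffAt ℝ 2 u (c + Complex.exp z)) :
    ContDiffAt ℝ 2 (compensatedCylLift u c k) z :=
  (contDiffAt_cylLift hu).sub (contDiffAt_mul_exp_re k z)

lemma compensatedCylLift_periodic (u : ℂ → ℝ) (c : ℂ) (k : ℝ) :
    Function.Periodic (compensatedCylLift u c k) (2 * Real.pi * Complex.I) := by
  intro z
  simp [compensatedCylLift, cylLift_periodic u c z]

lemma laplacian_compensatedCylLift (k : ℝ) (hu : ContDiffAt ℝ 2 u (c + Complex.exp z)) :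
    Δ (compensatedCylLift u c k) z = Δ (cylLift u c) z - k * Real.exp z.re := by
  have hexp : Δ (fun y : ℂ ↦ k * Real.exp y.re) z = k * Real.exp z.re := by
    rw [laplacian_comp_re (g := fun t ↦ k * Real.exp t) (by fun_prop)]
    simp
  exact ((contDiffAt_cylLift hu).laplacian_sub (contDiffAt_mul_exp_re k z)).trans (by rw [hexp])

lemma fderiv_compensatedCylLift (k : ℝ) (hu : ContDiffAt ℝ 2 u (c + Complex.exp z)) :
    fderiv ℝ (compensatedCylLift u c k) z 1 = fderiv ℝ (cylLift u c) z 1 - k * Real.exp z.re := by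
  have hexp : HasFDerivAt (fun y : ℂ ↦ k * Real.exp y.re) _ z :=
    (Complex.reCLM.hasFDerivAt.exp).const_mul k
  have h : HasFDerivAt (compensatedCylLift u c k) _ z :=
    ((contDiffAt_cylLift hu).differentiableAt (by norm_num)).hasFDerivAt.sub hexp
  rw [h.fderiv]
  simp

lemma tendsto_mul_exp_re (k : ℝ) :
    Tendsto (fun z : ℂ ↦ k * Real.exp z.re) (comap Complex.re atBot) (𝓝 0) := by
  simpa using (Real.tendsto_exp_atBot.comp tendsto_comap).const_mul k

lemma tendsto_compensatedCylLift_atBot (k : ℝ) (hu : ContinuousAt u c) :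
    Tendsto (compensatedCylLift u c k) (comap Complex.re atBot) atBot := by
  have hlin : Tendsto (fun z : ℂ ↦ 2 * z.re) (comap Complex.re atBot) atBot :=
    tendsto_comap.const_mul_atBot two_pos
  refine (((tendsto_cylLift_sub hu).sub (tendsto_mul_exp_re k)).add_atBot hlin).congr fun z ↦ ?_
  rw [compensatedCylLift]
  ring

lemma eventually_fderiv_compensatedCylLift_nonneg (k : ℝ) (hu : ContDiffAt ℝ 2 u c) :
    ∀ᶠ z in comap Complex.re atBot, 0 ≤ fderiv ℝ (compensatedCylLift u c k) z 1 := by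
  have hlim := (tendsto_fderiv_cylLift (hu.of_le one_le_two)).sub (tendsto_mul_exp_re k)
  filter_upwards [hlim.eventually_const_le (by norm_num : (0 : ℝ) < 2 - 0),
    (tendsto_add_exp c).eventually (hu.eventually (by simp))] with z hz huz
  rwa [fderiv_compensatedCylLift k huz]

namespace IsLiouvilleSolution

lemma mono (h : IsLiouvilleSolution a b A V u t) (hst : s ⊆ t) :
    IsLiouvilleSolution a b A V u s where
  contDiffAt z hz := h.contDiffAt z (hst hz)
  coeff_mem_Icc z hz := h.coeff_mem_Icc z (hst hz)
  abs_coeff_sub_le z hz z' hz' := h.abs_coeff_sub_le z (hst hz) z' (hst hz')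
  neg_laplacian_eq z hz := h.neg_laplacian_eq z (hst hz)

lemma laplacian_cylLift (h : IsLiouvilleSolution a b A V u s) (hz : c + Complex.exp z ∈ s) :
    Δ (cylLift u c) z = -(V (c + Complex.exp z) * Real.exp (cylLift u c z)) := by
  rw [_root_.laplacian_cylLift (h.contDiffAt _ hz), exp_cylLift, ← neg_eq_iff_eq_neg,
    neg_mul_eq_mul_neg, h.neg_laplacian_eq _ hz]
  ring

lemma laplacian_compensatedCylLift_le (h : IsLiouvilleSolution a b A V u s) (ha : 0 < a)
    (hA : 0 ≤ A) {z z' : ℂ} (hz : c + Complex.exp z ∈ s) (hz' : c + Complex.exp z' ∈ s)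
    (hre : z.re ≤ z'.re) (him : z.im = z'.im)
    (hle : compensatedCylLift u c (A / a) z ≤ compensatedCylLift u c (A / a) z') :
    Δ (compensatedCylLift u c (A / a)) z' ≤ Δ (compensatedCylLift u c (A / a)) z := by
  have hexp : Real.exp z.re ≤ Real.exp z'.re := Real.exp_le_exp.2 hre
  have hV : V (c + Complex.exp z) ≤
      V (c + Complex.exp z') + A * (Real.exp z'.re - Real.exp z.re) := by
    have hlip := h.abs_coeff_sub_le _ hz _ hz'
    rw [add_sub_add_left_eq_sub, norm_exp_sub_exp_of_im_eq him, abs_sub_comm (Real.exp _),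
      abs_of_nonneg (sub_nonneg.2 hexp)] at hlip
    linarith [(abs_le.1 hlip).2]
  have hw : cylLift u c z + A / a * (Real.exp z'.re - Real.exp z.re) ≤ cylLift u c z' := by
    simp only [compensatedCylLift] at hle
    linarith
  have hmain :=
    mul_exp_le_mul_exp_of_le_add ha (h.coeff_mem_Icc _ hz').1 hA (sub_nonneg.2 hexp) hV hw
  have hkexp : A / a * Real.exp z.re ≤ A / a * Real.exp z'.re := by gcongr
  rw [laplacian_compensatedCylLift _ (h.contDiffAt _ hz),
    laplacian_compensatedCylLift _ (h.contDiffAt _ hz'), h.laplacian_cylLift hz,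
    h.laplacian_cylLift hz']
  linarith

lemma fderiv_cylLift_one_nonneg (h : IsLiouvilleSolution a b A V u (closedBall c R)) (ha : 0 < a)
    (hA : 0 ≤ A) (hr : 0 < r) (hR : 0 < R)
    (hmax : ∀ y ∈ closedBall c r, u y ≤ u c + Real.log 4)
    (hCr : -u c + 2 * C - Real.log R ≤ Real.log r) (hCR : -u c / 2 + C < Real.log R)
    (hfar : ∀ y ∈ closedBall c R,
      4 * C + Real.log 4 - 4 * Real.log R + A / a * R < u c + u y)
    (hz : z.re ≤ -u c / 2 + C) : 0 ≤ fderiv ℝ (cylLift u c) z 1 := by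
  have hcont (y : ℂ) (hy : y.re ≤ Real.log R) : ContDiffAt ℝ 2 u (c + Complex.exp y) :=
    h.contDiffAt _ (add_exp_mem_closedBall hR hy)
  have hcenter : ContDiffAt ℝ 2 u c := h.contDiffAt c (mem_closedBall_self hR.le)
  have hboundary (l : ℝ) (hl : l ≤ -u c / 2 + C) (θ : ℝ) :
      compensatedCylLift u c (A / a) ⟨2 * l - Real.log R, θ⟩ <
        compensatedCylLift u c (A / a) ⟨Real.log R, θ⟩ := by
    have hlow := hmax _ (add_exp_mem_closedBall (c := c) (z := ⟨2 * l - Real.log R, θ⟩) hr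
      (by simp only; linarith))
    have hhigh := hfar _ (add_exp_mem_closedBall (c := c) (z := ⟨Real.log R, θ⟩) hR le_rfl)
    have hpos : 0 ≤ A / a * Real.exp (2 * l - Real.log R) := by positivity
    simp only [compensatedCylLift, cylLift, Real.exp_log hR]
    linarith
  have hcomp : 0 ≤ fderiv ℝ (compensatedCylLift u c (A / a)) z 1 :=
    fderiv_one_nonneg_of_moving_planes hCR
      (fun y hy ↦ contDiffAt_compensatedCylLift _ (hcont y hy)) (compensatedCylLift_periodic u c _)
      (fun y y' hre hy' him hle ↦ h.laplacian_compensatedCylLift_le ha hA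
        (add_exp_mem_closedBall hR (hre.trans hy')) (add_exp_mem_closedBall hR hy') hre him hle)
      (tendsto_compensatedCylLift_atBot _ hcenter.continuousAt)
      (eventually_fderiv_compensatedCylLift_nonneg _ hcenter) hboundary hz
  rw [fderiv_compensatedCylLift _ (hcont z (hz.trans hCR.le)), sub_nonneg] at hcomp
  exact le_trans (by positivity) hcomp

lemma neg_mul_exp_le_laplacian_cylLift (h : IsLiouvilleSolution a b A V u s) (hb : 0 ≤ b)
    (hz : c + Complex.exp z ∈ s) (hM : u (c + Complex.exp z) ≤ M + Real.log 4) :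
    -(4 * b * Real.exp (2 * (z.re - -M / 2))) ≤ Δ (cylLift u c) z := by
  rw [h.laplacian_cylLift hz, neg_le_neg_iff]
  calc V (c + Complex.exp z) * Real.exp (cylLift u c z)
      ≤ b * Real.exp (Real.log 4 + 2 * (z.re - -M / 2)) := by
        gcongr
        · exact (h.coeff_mem_Icc _ hz).2
        · rw [cylLift]
          linarith
    _ = 4 * b * Real.exp (2 * (z.re - -M / 2)) := by
        rw [Real.exp_add, Real.exp_log (by norm_num)]
        ring

lemma cylMean_laplacian_cylLift_le (h : IsLiouvilleSolution a b A V u (closedBall c R))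
    (ha : 0 ≤ a) (hR : 0 < R) {t : ℝ} (ht : t ≤ Real.log R) :
    cylMean (Δ (cylLift u c)) t ≤ -(a * Real.exp (cylMean (cylLift u c) t)) := by
  have hmem (z : ℂ) (hz : z.re = t) : c + Complex.exp z ∈ closedBall c R :=
    add_exp_mem_closedBall hR (hz.trans_le ht)
  have hcont (z : ℂ) (hz : z.re = t) : ContDiffAt ℝ 2 (cylLift u c) z :=
    contDiffAt_cylLift (h.contDiffAt _ (hmem z hz))
  calc cylMean (Δ (cylLift u c)) t
      ≤ cylMean (fun z ↦ -a * Real.exp (cylLift u c z)) t := by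
        refine cylMean_mono (fun z hz ↦ continuousAt_laplacian (hcont z hz))
          (fun z hz ↦ (hcont z hz).continuousAt.rexp.const_mul _) fun z hz ↦ ?_
        rw [h.laplacian_cylLift (hmem z hz), neg_mul, neg_le_neg_iff]
        gcongr
        exact (h.coeff_mem_Icc _ (hmem z hz)).1
    _ = -(a * cylMean (fun z ↦ Real.exp (cylLift u c z)) t) := by
        rw [cylMean_const_mul, neg_mul]
    _ ≤ -(a * Real.exp (cylMean (cylLift u c) t)) := by
        gcongr
        exact exp_cylMean_le fun z hz ↦ (hcont z hz).continuousAt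

lemma neg_mul_exp_le_cylMean_laplacian_cylLift
    (h : IsLiouvilleSolution a b A V u (closedBall c R)) (hb : 0 ≤ b) (hR : 0 < R) {t : ℝ}
    (ht : t ≤ Real.log R)
    (hM : ∀ z : ℂ, z.re = t → u (c + Complex.exp z) ≤ M + Real.log 4) :
    -(4 * b * Real.exp (2 * (t - -M / 2))) ≤ cylMean (Δ (cylLift u c)) t := by
  have hmem (z : ℂ) (hz : z.re = t) : c + Complex.exp z ∈ closedBall c R :=
    add_exp_mem_closedBall hR (hz.trans_le ht)
  rw [← cylMean_const (-(4 * b * Real.exp (2 * (t - -M / 2)))) t]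
  refine cylMean_mono (fun _ _ ↦ continuousAt_const)
    (fun z hz ↦ continuousAt_laplacian (contDiffAt_cylLift (h.contDiffAt _ (hmem z hz))))
    fun z hz ↦ ?_
  rw [← hz]
  exact h.neg_mul_exp_le_laplacian_cylLift hb (hmem z hz) (hM z hz)

lemma mul_exp_neg_mul_le_two (h : IsLiouvilleSolution a b A V u (closedBall c R)) (ha : 0 < a)
    (hC : 0 ≤ C) (hr : 0 < r) (hR : 0 < R) (hmax : ∀ y ∈ closedBall c r, u y ≤ u c + Real.log 4)
    (hMr : -u c / 2 ≤ Real.log r) (hCR : -u c / 2 + C < Real.log R)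
    (hmono : ∀ z : ℂ, z.re ≤ -u c / 2 + C → 0 ≤ fderiv ℝ (cylLift u c) z 1) :
    a * Real.exp (-b) * C ≤ 2 := by
  have hcenter : c ∈ closedBall c R := mem_closedBall_self hR.le
  have hb : 0 ≤ b := ha.le.trans ((h.coeff_mem_Icc c hcenter).1.trans (h.coeff_mem_Icc c hcenter).2)
  have hmem {z : ℂ} (hz : z.re ≤ Real.log R) : c + Complex.exp z ∈ closedBall c R :=
    add_exp_mem_closedBall hR hz
  have hcont (z : ℂ) (hz : z.re ≤ Real.log R) : ContDiffAt ℝ 2 (cylLift u c) z :=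
    contDiffAt_cylLift (h.contDiffAt _ (hmem hz))
  have hcont' (z : ℂ) (hz : z.re ≤ Real.log R) :
      ContinuousAt (fun y ↦ fderiv ℝ (cylLift u c) y 1) z :=
    ((hcont z hz).continuousAt_fderiv two_ne_zero).clm_apply continuousAt_const
  have hlim : Tendsto (fun t ↦ cylMean (cylLift u c) t - 2 * (t - -u c / 2)) atBot (𝓝 0) := by
    rw [← sub_self (u c)]
    refine ((tendsto_cylMean_cylLift_sub (fun z hz ↦ (hcont z hz).continuousAt)
      (h.contDiffAt c hcenter).continuousAt).sub_const (u c)).congr fun t ↦ ?_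
    ring
  refine mul_exp_mul_le_two_of_deriv_nonneg ha hC
    (fun t ht ↦ hasDerivAt_cylMean (fun z hz ↦ (hcont z hz).of_le one_le_two) (ht.trans_lt hCR))
    (fun t ht ↦ hasDerivAt_cylMean_fderiv_one hcont (cylLift_periodic u c) (ht.trans_lt hCR))
    (tendsto_cylMean_atBot hcont'
      (tendsto_fderiv_cylLift ((h.contDiffAt c hcenter).of_le one_le_two)))
    hlim (fun t ht ↦ ?_)
    (fun t ht ↦ h.cylMean_laplacian_cylLift_le ha.le hR (ht.trans hCR.le)) (fun t ht ↦ ?_)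
  · have htR : t ≤ Real.log R := by linarith
    exact h.neg_mul_exp_le_cylMean_laplacian_cylLift hb hR htR fun z hz ↦
      hmax _ (add_exp_mem_closedBall hr (hz.trans_le (ht.trans hMr)))
  · rw [← cylMean_const 0 t]
    exact cylMean_mono (fun _ _ ↦ continuousAt_const)
      (fun z hz ↦ hcont' z (hz.trans_le (ht.trans hCR.le))) fun z hz ↦ hmono z (hz.trans_le ht)

lemma exists_add_le_of_two_mul_exp_div_lt (h : IsLiouvilleSolution a b A V u (closedBall c R))
    (ha : 0 < a) (hA : 0 ≤ A) (hr : 0 < r) (hR : 0 < R)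
    (hmax : ∀ y ∈ closedBall c r, u y ≤ u c + Real.log 4) (hC : 2 * Real.exp b / a < C)
    (hMr : -u c / 2 ≤ Real.log r) (hCr : -u c + 2 * C - Real.log R ≤ Real.log r)
    (hCR : -u c / 2 + C < Real.log R) :
    ∃ y ∈ closedBall c R, u c + u y ≤ 4 * C + Real.log 4 - 4 * Real.log R + A / a * R := by
  by_contra! hfar
  have hC0 : 0 < C := lt_trans (by positivity) hC
  have hle := h.mul_exp_neg_mul_le_two ha hC0.le hr hR hmax hMr hCR fun z hz ↦
    h.fderiv_cylLift_one_nonneg ha hA hr hR hmax hCr hCR hfar hz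
  rw [div_lt_iff₀ ha] at hC
  rw [Real.exp_neg, mul_right_comm, ← div_eq_mul_inv, div_le_iff₀ (Real.exp_pos b)] at hle
  linarith

theorem exists_add_le (h : IsLiouvilleSolution a b A V u (closedBall c (2 * R))) (ha : 0 < a)
    (hA : 0 ≤ A) (hR : 0 < R) :
    ∃ y ∈ closedBall c (2 * R), u c + u y ≤
      4 * (3 * Real.exp b / a) + 2 * Real.log 4 + 4 * |Real.log R| + A / a * R := by
  set C := 3 * Real.exp b / a with hC
  have hC0 : 0 < C := by positivity
  have hAR : 0 ≤ A / a * R := by positivity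
  obtain hsmall | hlarge :=
    le_or_gt (u c) (2 * C + Real.log 4 + 2 * |Real.log R| + A / a * R / 2)
  · exact ⟨c, mem_closedBall_self (by positivity), by linarith⟩
  have hcont : ContinuousOn u (closedBall c R) := fun z hz ↦ (h.contDiffAt z
    (closedBall_subset_closedBall (by linarith) hz)).continuousAt.continuousWithinAt
  obtain ⟨y, d, hd, hdR, hlog, hmax⟩ := exists_forall_mem_closedBall_half_le_add_log_four hR hcont
  have hsub : closedBall y R ⊆ closedBall c (2 * R) :=
    closedBall_subset_closedBall' (by linarith)
  have hlogd : Real.log d ≤ Real.log R :=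
    Real.log_le_log hd (by linarith [dist_nonneg (x := y) (y := c)])
  have hlogr := log_div_two_eq hd.ne'
  have hlog4 : 0 < Real.log 4 := Real.log_pos (by norm_num)
  have hlogR := neg_abs_le (Real.log R)
  have hC' : 2 * Real.exp b / a < C := by
    rw [hC]
    gcongr
    norm_num
  obtain ⟨z, hz, hle⟩ := (h.mono hsub).exists_add_le_of_two_mul_exp_div_lt ha hA (half_pos hd) hR
    hmax hC' (by linarith) (by linarith) (by linarith)
  exact ⟨z, hsub hz, by linarith⟩

end IsLiouvilleSolution

lemma isLiouvilleSolution_comp_orthonormalBasisOneI {Ω : Set E2} (hΩ : IsOpen Ω) {V u : E2 → ℝ}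
    (hV : ∀ x ∈ Ω, a ≤ V x ∧ V x ≤ b)
    (hVL : ∀ x ∈ Ω, ∀ y ∈ Ω, |V x - V y| ≤ A * ‖x - y‖) (hu : ContDiffOn ℝ 2 u Ω)
    (heq : ∀ x ∈ Ω, -(lapl u x) = V x * Real.exp (u x)) (x : E2) :
    IsLiouvilleSolution a b A (fun ζ ↦ V (x + Complex.orthonormalBasisOneI.repr ζ))
      (fun ζ ↦ u (x + Complex.orthonormalBasisOneI.repr ζ))
      {ζ | x + Complex.orthonormalBasisOneI.repr ζ ∈ Ω} where
  contDiffAt ζ hζ := (hu.contDiffAt (hΩ.mem_nhds hζ)).comp ζ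
    (contDiffAt_const.add Complex.orthonormalBasisOneI.repr.contDiff.contDiffAt)
  coeff_mem_Icc ζ hζ := hV _ hζ
  abs_coeff_sub_le ζ hζ ζ' hζ' := by
    simpa only [add_sub_add_left_eq_sub, ← map_sub, LinearIsometryEquiv.norm_map]
      using hVL _ hζ _ hζ'
  neg_laplacian_eq ζ hζ := by
    rw [laplacian_comp_add_linearIsometryEquiv,
      ← lapl_eq_laplacian (hu.contDiffAt (hΩ.mem_nhds hζ)), heq _ hζ]

end SupInf

theorem stmt5 (Ω : Set E2) (hΩ : IsOpen Ω) (a b A : ℝ) (ha : 0 < a) (hab : a ≤ b)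
    (hA : 0 < A) (K : Set E2) (hK : IsCompact K) (hKΩ : K ⊆ Ω) :
    ∃ c : ℝ, ∀ V u : E2 → ℝ,
      (∀ x ∈ Ω, a ≤ V x ∧ V x ≤ b) →
      (∀ x ∈ Ω, ∀ y ∈ Ω, |V x - V y| ≤ A * ‖x - y‖) →
      ContDiffOn ℝ 2 u Ω →
      (∀ x ∈ Ω, -(lapl u x) = V x * Real.exp (u x)) →
      ∀ x ∈ K, ∀ ε : ℝ, 0 < ε → ∃ y ∈ Ω, u x + u y < c + ε := by
  obtain ⟨δ, hδ, hδΩ⟩ := hK.exists_cthickening_subset_open hΩ hKΩ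
  refine ⟨4 * (3 * Real.exp b / a) + 2 * Real.log 4 + 4 * |Real.log (δ / 2)| + A / a * (δ / 2),
    fun V u hV hVL hu heq x hx ε hε ↦ ?_⟩
  let ι := Complex.orthonormalBasisOneI.repr
  have hball : closedBall (0 : ℂ) (2 * (δ / 2)) ⊆ {ζ | x + ι ζ ∈ Ω} := fun ζ hζ ↦ by
    refine hδΩ (closedBall_subset_cthickening hx δ ?_)
    simpa [ι, mul_div_cancel₀] using hζ
  obtain ⟨ζ, hζ, hle⟩ := ((isLiouvilleSolution_comp_orthonormalBasisOneI hΩ hV hVL hu heq x).mono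
    hball).exists_add_le ha hA.le (half_pos hδ)
  rw [map_zero, add_zero] at hle
  exact ⟨x + ι ζ, hball hζ, hle.trans_lt (lt_add_of_pos_right _ hε)⟩
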